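/- Let c ∈ [0,1), s = √(1−c²), and let f be defined by f(x) = (1/16)·( ((σ_3/64)x² + (c/4)x − s²)² − (1/16)(1 − σ_2 + 2σ_3)c²x² + (1/16)(2 − σ_1)x² − c(x − 8c) )² − (64 + u_1²u_2²u_3²x²)·( x/32 − c/8 − c³/8 + (σ_3/512)c x² )², with u_1 = √(2(2+√2)) − 1 − √2, u_2 = √(2+√2) − 1, u_3 = 1 + √2 − √(2+√2), σ_1 = (1−u_1²)+(1−u_2²)+(1−u_3²), σ_2 = (1−u_1²)(1−u_2²)+(1−u_1²)(1−u_3²)+(1−u_2²)(1−u_3²), σ_3 = (1−u_1²)(1−u_2²)(1−u_3²). Let ζ₋ be the largest negative zero of f. If c > 0, then every positive zero ζ₊ of f satisfies ζ₊ > −ζ₋. If c = 0, then f is an even function, f has a positive zero, and the smallest positive zero of f equals −ζ₋. -/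

import Mathlib

open Real

noncomputable def u1 : ℝ := Real.sqrt (2 * (2 + Real.sqrt 2)) - 1 - Real.sqrt 2

noncomputable def u2 : ℝ := Real.sqrt (2 + Real.sqrt 2) - 1

noncomputable def u3 : ℝ := 1 + Real.sqrt 2 - Real.sqrt (2 + Real.sqrt 2)

noncomputable def σ1 : ℝ := (1 - u1 ^ 2) + (1 - u2 ^ 2) + (1 - u3 ^ 2)

noncomputable def σ2 : ℝ :=
  (1 - u1 ^ 2) * (1 - u2 ^ 2) + (1 - u1 ^ 2) * (1 - u3 ^ 2) + (1 - u2 ^ 2) * (1 - u3 ^ 2)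

noncomputable def σ3 : ℝ := (1 - u1 ^ 2) * (1 - u2 ^ 2) * (1 - u3 ^ 2)

/-- The resolvent function `f` of the quartic G⁰ interpolation problem
(equation (6) of the paper). -/
noncomputable def quarticF (c s x : ℝ) : ℝ :=
  (1 / 16) * (((σ3 / 64) * x ^ 2 + (c / 4) * x - s ^ 2) ^ 2
      - (1 / 16) * (1 - σ2 + 2 * σ3) * c ^ 2 * x ^ 2
      + (1 / 16) * (2 - σ1) * x ^ 2 - c * (x - 8 * c)) ^ 2
    - (64 + u1 ^ 2 * u2 ^ 2 * u3 ^ 2 * x ^ 2)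
      * (x / 32 - c / 8 - c ^ 3 / 8 + (σ3 / 512) * c * x ^ 2) ^ 2

/-!
Write the resolvent as `f = A² / 16 - (64 + k x²) B²`. Since `k ≥ 0`, `f` is at most
`(A / 4 + 8 B) (A / 4 - 8 B)`, and the first factor has value `(1 - c)⁴ / 4` and slope
`(1 - c)² (2 + c) / 8` at `0`. Twice the Newton step `-2 (1 - c)² / (2 + c)` is at least
`-2 (1 - c)²`, and at this last point the factor is already negative. As `f 0 > 0`, there is a zero
in `(-2 (1 - c)², 0)`, so only positive zeros `x ≤ 2 (1 - c)²` matter. For those, if `c > 0`,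
the odd part of `f` is positive, whence `f (-x) < f x = 0` and `f` has a zero in `(-x, 0)`.
-/

open Set

theorem isLeast_pos_zeros_of_even {G M : Type*} [AddCommGroup G] [PartialOrder G]
    [IsOrderedAddMonoid G] [Zero M] {f : G → M} (hf : Function.Even f) {a : G}
    (ha : IsGreatest {z | z < 0 ∧ f z = 0} a) : IsLeast {z | 0 < z ∧ f z = 0} (-a) := by
  obtain ⟨⟨ha_neg, hfa⟩, ha_max⟩ := ha
  exact ⟨⟨neg_pos.2 ha_neg, (hf a).trans hfa⟩,
    fun z ⟨hz, hfz⟩ => neg_le.1 (ha_max ⟨neg_neg_of_pos hz, (hf z).trans hfz⟩)⟩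

section Constants

theorem sqrt_two_mem_Icc : √2 ∈ Icc (7 / 5 : ℝ) (3 / 2) :=
  ⟨Real.le_sqrt_of_sq_le (by norm_num), Real.sqrt_le_iff.2 (by norm_num)⟩

theorem u1_mem_Icc : u1 ∈ Icc (0 : ℝ) (1 / 2) := by
  have hsq : √2 ^ 2 = 2 := Real.sq_sqrt zero_le_two
  have lower : 1 + √2 ≤ √(2 * (2 + √2)) := Real.le_sqrt_of_sq_le (by linarith)
  have upper : √(2 * (2 + √2)) ≤ 3 / 2 + √2 :=
    Real.sqrt_le_iff.2 ⟨by positivity, by linarith [Real.sqrt_nonneg 2]⟩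
  constructor <;> unfold u1 <;> linarith

theorem u2_mem_Icc : u2 ∈ Icc (21 / 25 : ℝ) (9 / 10) := by
  obtain ⟨hl, hu⟩ := sqrt_two_mem_Icc
  have lower : 46 / 25 ≤ √(2 + √2) := Real.le_sqrt_of_sq_le (by linarith)
  have upper : √(2 + √2) ≤ 19 / 10 := Real.sqrt_le_iff.2 ⟨by norm_num, by linarith⟩
  constructor <;> unfold u2 <;> linarith

theorem u3_mem_Icc : u3 ∈ Icc (11 / 20 : ℝ) (3 / 5) := by
  have hsq : √2 ^ 2 = 2 := Real.sq_sqrt zero_le_two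
  obtain ⟨hl, hu⟩ := sqrt_two_mem_Icc
  have lower : √2 + 2 / 5 ≤ √(2 + √2) := Real.le_sqrt_of_sq_le (by linarith)
  have upper : √(2 + √2) ≤ √2 + 9 / 20 :=
    Real.sqrt_le_iff.2 ⟨by positivity, by linarith⟩
  constructor <;> unfold u3 <;> linarith

theorem one_sub_sq_mem_Icc {u : ℝ} (h₀ : 0 ≤ u) (h₁ : u ≤ 1) : 1 - u ^ 2 ∈ Icc (0 : ℝ) 1 :=
  Icc.one_sub_mem ⟨sq_nonneg u, pow_le_one₀ h₀ h₁⟩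

theorem one_sub_u1_sq_mem_Icc : 1 - u1 ^ 2 ∈ Icc (0 : ℝ) 1 :=
  one_sub_sq_mem_Icc u1_mem_Icc.1 (u1_mem_Icc.2.trans (by norm_num))

theorem one_sub_u2_sq_mem_Icc : 1 - u2 ^ 2 ∈ Icc (0 : ℝ) 1 :=
  one_sub_sq_mem_Icc (le_trans (by norm_num) u2_mem_Icc.1) (u2_mem_Icc.2.trans (by norm_num))

theorem one_sub_u3_sq_mem_Icc : 1 - u3 ^ 2 ∈ Icc (0 : ℝ) 1 :=
  one_sub_sq_mem_Icc (le_trans (by norm_num) u3_mem_Icc.1) (u3_mem_Icc.2.trans (by norm_num))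

theorem two_sub_σ1_mem_Icc : 2 - σ1 ∈ Icc (0 : ℝ) 1 := by
  obtain ⟨h₁, h₁'⟩ := u1_mem_Icc
  obtain ⟨h₂, h₂'⟩ := u2_mem_Icc
  obtain ⟨h₃, h₃'⟩ := u3_mem_Icc
  have : u1 ^ 2 ≤ (1 / 2) ^ 2 := by gcongr
  have : u2 ^ 2 ≤ (9 / 10) ^ 2 := by gcongr
  have : u3 ^ 2 ≤ (3 / 5) ^ 2 := by gcongr
  have : (21 / 25) ^ 2 ≤ u2 ^ 2 := by gcongr
  have : (11 / 20) ^ 2 ≤ u3 ^ 2 := by gcongr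
  constructor <;> unfold σ1 <;> linarith [sq_nonneg u1]

theorem σ3_mem_Icc : σ3 ∈ Icc (0 : ℝ) 1 :=
  unitInterval.mul_mem (unitInterval.mul_mem one_sub_u1_sq_mem_Icc one_sub_u2_sq_mem_Icc)
    one_sub_u3_sq_mem_Icc

/-- With `a`, `b`, `d` the probabilities of three independent events, this is the probability that
at most one of them occurs. -/
theorem one_sub_add_two_mul_mem_Icc {a b d : ℝ} (ha : a ∈ Icc (0 : ℝ) 1)
    (hb : b ∈ Icc (0 : ℝ) 1) (hd : d ∈ Icc (0 : ℝ) 1) :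
    1 - (a * b + a * d + b * d) + 2 * (a * b * d) ∈ Icc (0 : ℝ) 1 := by
  obtain ⟨ha₀, ha₁⟩ := And.imp_right sub_nonneg.2 ha
  obtain ⟨hb₀, hb₁⟩ := And.imp_right sub_nonneg.2 hb
  obtain ⟨hd₀, hd₁⟩ := And.imp_right sub_nonneg.2 hd
  constructor
  · calc 0 ≤ (1 - a) * (1 - b) + (1 - d) * (a * (1 - b) + (1 - a) * b) := by positivity
      _ = _ := by ring
  · rw [← sub_nonneg]
    calc 0 ≤ a * b + d * (a * (1 - b) + (1 - a) * b) := by positivity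
      _ = _ := by ring

theorem one_sub_σ2_add_two_mul_σ3_mem_Icc : 1 - σ2 + 2 * σ3 ∈ Icc (0 : ℝ) 1 :=
  one_sub_add_two_mul_mem_Icc one_sub_u1_sq_mem_Icc one_sub_u2_sq_mem_Icc one_sub_u3_sq_mem_Icc

end Constants

/-- The expression whose square is the positive part of the resolvent, with `1 - c²` for `s²` and
with arbitrary coefficients: the paper's function has `p = σ₃ / 64`, `q = 1 - σ₂ + 2 σ₃` and
`m = 2 - σ₁`. -/
noncomputable def resolventA (p q m c x : ℝ) : ℝ :=
  (p * x ^ 2 + c / 4 * x - (1 - c ^ 2)) ^ 2 - q * c ^ 2 * x ^ 2 / 16 + m * x ^ 2 / 16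
    - c * (x - 8 * c)

/-- The expression whose square carries the negative part of the resolvent; `p = σ₃ / 64` in the
paper. -/
noncomputable def resolventB (p c x : ℝ) : ℝ :=
  x / 32 - c / 8 - c ^ 3 / 8 + p / 8 * c * x ^ 2

/-- The resolvent with arbitrary coefficients; `k = u₁² u₂² u₃²` in the paper. -/
noncomputable def quarticResolvent (p q m k c x : ℝ) : ℝ :=
  resolventA p q m c x ^ 2 / 16 - (64 + k * x ^ 2) * resolventB p c x ^ 2

/-- The factor of `(resolventA / 4)² - (8 resolventB)²` that changes sign just below `0`, which
locates a negative zero of the resolvent. -/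
noncomputable def resolventFactor (p q m c x : ℝ) : ℝ :=
  resolventA p q m c x / 4 + 8 * resolventB p c x

/-- The even part of `resolventA` as a function of `x`. -/
noncomputable def resolventAEven (p q m c x : ℝ) : ℝ :=
  (1 - c ^ 2 - p * x ^ 2) ^ 2 + (1 - q) * c ^ 2 * x ^ 2 / 16 + m * x ^ 2 / 16 + 8 * c ^ 2

theorem quarticF_eq_quarticResolvent {c s : ℝ} (hs : s ^ 2 = 1 - c ^ 2) :
    quarticF c s = quarticResolvent (σ3 / 64) (1 - σ2 + 2 * σ3) (2 - σ1)
      (u1 ^ 2 * u2 ^ 2 * u3 ^ 2) c := by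
  ext x
  simp only [quarticF, quarticResolvent, resolventA, resolventB, hs]
  ring

section Resolvent

variable {p q m k c x : ℝ}

theorem continuous_quarticResolvent : Continuous (quarticResolvent p q m k c) := by
  unfold quarticResolvent resolventA resolventB
  fun_prop

theorem quarticResolvent_zero : quarticResolvent p q m k c 0 = (1 - c ^ 2) ^ 4 / 16 := by
  unfold quarticResolvent resolventA resolventB
  ring

theorem exists_quarticResolvent_eq_zero_of_neg (hc : c ^ 2 ≠ 1) (hx : x ≤ 0)
    (hneg : quarticResolvent p q m k c x < 0) :
    ∃ z ∈ Ioo x 0, quarticResolvent p q m k c z = 0 := by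
  have hpos : 0 < quarticResolvent p q m k c 0 := by
    have : 1 - c ^ 2 ≠ 0 := sub_ne_zero.2 hc.symm
    rw [quarticResolvent_zero]
    positivity
  exact intermediate_value_Ioo hx continuous_quarticResolvent.continuousOn ⟨hneg, hpos⟩

theorem quarticResolvent_neg_of_resolventFactor_neg (hk : 0 ≤ k)
    (hA : 0 ≤ resolventA p q m c x) (hF : resolventFactor p q m c x < 0) :
    quarticResolvent p q m k c x < 0 := by
  unfold resolventFactor at hF
  set A := resolventA p q m c x
  set B := resolventB p c x
  have hprod : (A / 4 + 8 * B) * (A / 4 - 8 * B) < 0 :=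
    mul_neg_of_neg_of_pos hF (by linarith)
  have hkB : 0 ≤ k * x ^ 2 * B ^ 2 := by positivity
  calc quarticResolvent p q m k c x
      = (A / 4 + 8 * B) * (A / 4 - 8 * B) - k * x ^ 2 * B ^ 2 := by
        unfold quarticResolvent
        ring
    _ < 0 := by linarith

theorem resolventA_nonneg (hq : q ≤ 1) (hm : 0 ≤ m) (hc : 0 ≤ c) (hx : x ∈ Icc (-2) 0) :
    0 ≤ resolventA p q m c x := by
  have hx2 : x ^ 2 ≤ 2 ^ 2 := sq_le_sq' hx.1 (hx.2.trans zero_le_two)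
  have hqx : q * c ^ 2 * x ^ 2 ≤ 1 * c ^ 2 * 2 ^ 2 := by gcongr
  have hmx : 0 ≤ m * x ^ 2 := by positivity
  have hcx : c * x ≤ 0 := mul_nonpos_of_nonneg_of_nonpos hc hx.2
  unfold resolventA
  linarith [sq_nonneg (p * x ^ 2 + c / 4 * x - (1 - c ^ 2)), sq_nonneg c]

theorem resolventFactor_eq :
    resolventFactor p q m c x =
      (1 - c) ^ 4 / 4 + (1 - c) ^ 2 * (2 + c) / 8 * x
        + x ^ 2 * (((c / 4 + p * x) ^ 2 - 2 * p * (1 - c ^ 2)) / 4 + (m - q * c ^ 2) / 64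
          + p * c) := by
  unfold resolventFactor resolventA resolventB
  ring

theorem resolventFactor_neg_two_mul_one_sub_sq_neg (hp : p ∈ Icc 0 (1 / 64)) (hq : 0 ≤ q)
    (hm : m ≤ 1) (hc : c ∈ Ico 0 1) :
    resolventFactor p q m c (-(2 * (1 - c) ^ 2)) < 0 := by
  obtain ⟨hp₀, hp₁⟩ := hp
  obtain ⟨hc₀, hc₁⟩ := hc
  have hd : 0 < 1 - c := sub_pos.2 hc₁
  set r := (1 - c) ^ 2 with hr
  have hr₁ : r ≤ 1 := pow_le_one₀ hd.le (by linarith)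
  have hquad : (c / 4 + p * -(2 * r)) ^ 2 ≤ (1 / 4) ^ 2 := by
    have hpr : p * r ≤ 1 / 64 * 1 := by gcongr
    have hpr₀ : 0 ≤ p * r := by positivity
    exact sq_le_sq' (by linarith) (by linarith)
  have hpS : 0 ≤ p * (1 - c ^ 2) := mul_nonneg hp₀ (sub_nonneg.2 (pow_le_one₀ hc₀ hc₁.le))
  have hqc : 0 ≤ q * c ^ 2 := by positivity
  have hpc : p * c ≤ 1 / 64 * c := by gcongr
  set a₂ := ((c / 4 + p * -(2 * r)) ^ 2 - 2 * p * (1 - c ^ 2)) / 4 + (m - q * c ^ 2) / 64 + p * c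
    with ha₂
  have ha₂_le : a₂ ≤ (2 + c) / 64 := by linarith
  have hbracket : 1 / 4 - (2 + c) / 4 + 4 * a₂ < 0 := by linarith only [ha₂_le, hc₀]
  calc resolventFactor p q m c (-(2 * r))
      = (1 - c) ^ 4 * (1 / 4 - (2 + c) / 4 + 4 * a₂) := by
        rw [resolventFactor_eq, ← ha₂, hr]
        ring
    _ < 0 := mul_neg_of_pos_of_neg (by positivity) hbracket

theorem quarticResolvent_neg_two_mul_one_sub_sq_neg (hp : p ∈ Icc 0 (1 / 64))
    (hq : q ∈ Icc 0 1) (hm : m ∈ Icc 0 1) (hk : 0 ≤ k) (hc : c ∈ Ico 0 1) :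
    quarticResolvent p q m k c (-(2 * (1 - c) ^ 2)) < 0 := by
  have hr : (1 - c) ^ 2 ≤ 1 := pow_le_one₀ (sub_nonneg.2 hc.2.le) (by linarith [hc.1])
  have hx : -(2 * (1 - c) ^ 2) ∈ Icc (-2) 0 := ⟨by linarith, by linarith [sq_nonneg (1 - c)]⟩
  exact quarticResolvent_neg_of_resolventFactor_neg hk (resolventA_nonneg hq.2 hm.1 hc.1 hx)
    (resolventFactor_neg_two_mul_one_sub_sq_neg hp hq.1 hm.2 hc)

theorem quarticResolvent_sub_quarticResolvent_neg :
    quarticResolvent p q m k c x - quarticResolvent p q m k c (-x) =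
      c * x * ((1 + k * x ^ 2 / 64) * (1 + c ^ 2 - p * x ^ 2)
        - resolventAEven p q m c x * (3 - c ^ 2 - p * x ^ 2) / 8) := by
  unfold quarticResolvent resolventA resolventB resolventAEven
  ring

theorem resolventAEven_le (hp : 0 ≤ p) (hq : 0 ≤ q) (hm : m ≤ 1) (hc : c ^ 2 ≤ 1)
    (hx : p * x ^ 2 ≤ 1 - c ^ 2) :
    resolventAEven p q m c x ≤ (1 - c ^ 2) ^ 2 + 8 * c ^ 2 + x ^ 2 / 8 := by
  have hpx : 0 ≤ p * x ^ 2 := by positivity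
  have hsq : (1 - c ^ 2 - p * x ^ 2) ^ 2 ≤ (1 - c ^ 2) ^ 2 :=
    pow_le_pow_left₀ (sub_nonneg.2 hx) (sub_le_self _ hpx) 2
  have hqx : 0 ≤ q * (c ^ 2 * x ^ 2) := by positivity
  have hcx : c ^ 2 * x ^ 2 ≤ 1 * x ^ 2 := by gcongr
  have hmx : m * x ^ 2 ≤ 1 * x ^ 2 := by gcongr
  unfold resolventAEven
  linarith

theorem mul_sq_le_one_sub_sq (hp : p ≤ 1 / 64) (hc : c ^ 2 ≤ 1)
    (hx : x ^ 2 ≤ 4 * (1 - c ^ 2) ^ 2) : p * x ^ 2 ≤ 1 - c ^ 2 := by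
  have hS : (1 - c ^ 2) ^ 2 ≤ 1 - c ^ 2 :=
    pow_le_of_le_one (sub_nonneg.2 hc) (sub_le_self _ (sq_nonneg c)) two_ne_zero
  have hpx : p * x ^ 2 ≤ 1 / 64 * x ^ 2 := by gcongr
  linarith

theorem resolventAEven_mul_lt (hp : p ∈ Icc 0 (1 / 64)) (hq : 0 ≤ q) (hm : m ≤ 1)
    (hc : c ^ 2 < 1) (hx : x ^ 2 ≤ 4 * (1 - c ^ 2) ^ 2) :
    resolventAEven p q m c x * (3 - c ^ 2 - p * x ^ 2) < 8 * (1 + c ^ 2 - p * x ^ 2) := by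
  obtain ⟨hp₀, hp₁⟩ := hp
  have hpx₀ : 0 ≤ p * x ^ 2 := by positivity
  have hpx : p * x ^ 2 ≤ 1 / 64 * x ^ 2 := by gcongr
  have hpx_le := mul_sq_le_one_sub_sq hp₁ hc.le hx
  have hAEven := resolventAEven_le hp₀ hq hm hc.le hpx_le
  obtain ⟨S, hS⟩ : ∃ S, S = 1 - c ^ 2 := ⟨_, rfl⟩
  rw [← hS] at hAEven hx
  have hS₀ : 0 < S := by linarith
  have hS₁ : S ≤ 1 := by linarith [sq_nonneg c]
  -- The difference of the two sides at `x = 0` is `S² (6 - S) ≥ 5 S²`; the rest is `O(x²)`.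
  have hzero : (S ^ 2 + 8 * c ^ 2) * (2 + S) = 8 * (1 + c ^ 2) - S ^ 2 * (6 - S) := by
    rw [hS]
    ring
  have hS2 : S ^ 2 * 5 ≤ S ^ 2 * (6 - S) := by gcongr; linarith
  have hS2_pos : 0 < S ^ 2 := by positivity
  have hxS : x ^ 2 * S ≤ x ^ 2 := mul_le_of_le_one_right (sq_nonneg x) hS₁
  calc resolventAEven p q m c x * (3 - c ^ 2 - p * x ^ 2)
      ≤ (S ^ 2 + 8 * c ^ 2 + x ^ 2 / 8) * (2 + S) := by gcongr <;> linarith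
    _ < 8 * (1 + c ^ 2 - p * x ^ 2) := by linarith

theorem quarticResolvent_neg_lt_quarticResolvent (hp : p ∈ Icc 0 (1 / 64)) (hq : 0 ≤ q)
    (hm : m ≤ 1) (hk : 0 ≤ k) (hc : c ∈ Ioo 0 1) (hx : 0 < x) (hxc : x ≤ 2 * (1 - c ^ 2)) :
    quarticResolvent p q m k c (-x) < quarticResolvent p q m k c x := by
  have hc2 : c ^ 2 < 1 := pow_lt_one₀ hc.1.le hc.2 two_ne_zero
  have hx2 : x ^ 2 ≤ 4 * (1 - c ^ 2) ^ 2 := by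
    calc x ^ 2 ≤ (2 * (1 - c ^ 2)) ^ 2 := by gcongr
      _ = 4 * (1 - c ^ 2) ^ 2 := by ring
  have hT : 0 ≤ 1 + c ^ 2 - p * x ^ 2 := by
    linarith [mul_sq_le_one_sub_sq hp.2 hc2.le hx2, sq_nonneg c]
  have hkT : 0 ≤ k * x ^ 2 / 64 * (1 + c ^ 2 - p * x ^ 2) := by positivity
  rw [← sub_pos, quarticResolvent_sub_quarticResolvent_neg]
  exact mul_pos (mul_pos hc.1 hx) (by linarith [resolventAEven_mul_lt hp hq hm hc2 hx2])

theorem exists_quarticResolvent_eq_zero_of_pos_zero (hp : p ∈ Icc 0 (1 / 64)) (hq : q ∈ Icc 0 1)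
    (hm : m ∈ Icc 0 1) (hk : 0 ≤ k) (hc : c ∈ Ioo 0 1) (hx : 0 < x)
    (hfx : quarticResolvent p q m k c x = 0) :
    ∃ z ∈ Ioo (-x) 0, quarticResolvent p q m k c z = 0 := by
  have hc2 : c ^ 2 ≠ 1 := (pow_lt_one₀ hc.1.le hc.2 two_ne_zero).ne
  rcases le_or_gt x (2 * (1 - c) ^ 2) with hnear | hfar
  · have hxc : x ≤ 2 * (1 - c ^ 2) := by nlinarith [hc.1, hc.2]
    exact exists_quarticResolvent_eq_zero_of_neg hc2 (neg_nonpos.2 hx.le)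
      ((quarticResolvent_neg_lt_quarticResolvent hp hq.1 hm.2 hk hc hx hxc).trans_eq hfx)
  · obtain ⟨z, hz, hfz⟩ := exists_quarticResolvent_eq_zero_of_neg hc2
      (neg_nonpos.2 (by positivity))
      (quarticResolvent_neg_two_mul_one_sub_sq_neg hp hq hm hk (Ioo_subset_Ico_self hc))
    exact ⟨z, ⟨(neg_lt_neg hfar).trans hz.1, hz.2⟩, hfz⟩

end Resolvent

theorem exists_quarticF_eq_zero_of_pos_zero {c s x : ℝ} (hc : c ∈ Ioo 0 1)
    (hs : s ^ 2 = 1 - c ^ 2) (hx : 0 < x) (hfx : quarticF c s x = 0) :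
    ∃ z ∈ Ioo (-x) 0, quarticF c s z = 0 := by
  rw [quarticF_eq_quarticResolvent hs] at hfx ⊢
  have hp : σ3 / 64 ∈ Icc 0 (1 / 64) :=
    ⟨div_nonneg σ3_mem_Icc.1 (by norm_num), by linarith [σ3_mem_Icc.2]⟩
  exact exists_quarticResolvent_eq_zero_of_pos_zero hp one_sub_σ2_add_two_mul_σ3_mem_Icc
    two_sub_σ1_mem_Icc (by positivity) hc hx hfx

theorem quarticF_zero_even (s : ℝ) : Function.Even (quarticF 0 s) := fun x => by
  unfold quarticF
  ring

/-- Lemma 3 of the paper: let `ζ₋` be the largest negative zero of the resolvent `f`.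
If `c > 0` then every positive zero of `f` exceeds `−ζ₋`; if `c = 0` then `f` is even,
has a positive zero, and its smallest positive zero equals `−ζ₋`. -/
theorem stmt_16 (c : ℝ) (hc : c ∈ Set.Ico (0 : ℝ) 1) (s : ℝ)
    (hs : s = Real.sqrt (1 - c ^ 2))
    (ζm : ℝ) (hζm : IsGreatest {z : ℝ | z < 0 ∧ quarticF c s z = 0} ζm) :
    (0 < c → ∀ ζp : ℝ, 0 < ζp → quarticF c s ζp = 0 → -ζm < ζp) ∧
    (c = 0 →
      (∀ x : ℝ, quarticF c s (-x) = quarticF c s x) ∧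
      (∃ ζp : ℝ, 0 < ζp ∧ quarticF c s ζp = 0) ∧
      IsLeast {z : ℝ | 0 < z ∧ quarticF c s z = 0} (-ζm)) := by
  obtain ⟨hc₀, hc₁⟩ := hc
  refine ⟨fun hc_pos x hx hfx => ?_, ?_⟩
  · have hs2 : s ^ 2 = 1 - c ^ 2 := by
      rw [hs, Real.sq_sqrt (sub_nonneg.2 (pow_le_one₀ hc₀ hc₁.le))]
    obtain ⟨z, hz, hfz⟩ := exists_quarticF_eq_zero_of_pos_zero ⟨hc_pos, hc₁⟩ hs2 hx hfx
    exact neg_lt.1 (hz.1.trans_le (hζm.2 ⟨hz.2, hfz⟩))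
  · rintro rfl
    have hleast := isLeast_pos_zeros_of_even (quarticF_zero_even s) hζm
    exact ⟨quarticF_zero_even s, ⟨-ζm, hleast.1⟩, hleast⟩
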